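/- Let γ ∈ (0, 1] and let X, Y be independent random variables, each uniformly distributed on [0, 1]. Then the random variable Z = Y·(γX + (1−γ)/2) has probability density (with respect to Lebesgue measure) equal almost everywhere to the function taking the value (1/γ)·ln((1+γ)/(1−γ)) for z ∈ [0, (1−γ)/2], the value (1/γ)·ln((1+γ)/(2z)) for z ∈ ((1−γ)/2, (1+γ)/2], and 0 otherwise. -/

import Mathlib

open MeasureTheory

noncomputable section

/-- The piecewise density: `(1/γ)·ln((1+γ)/(1−γ))` on `[0,(1−γ)/2]`,
`(1/γ)·ln((1+γ)/(2z))` on `((1−γ)/2,(1+γ)/2]`, and `0` otherwise. -/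
def fidDensity (γ : ℝ) : ℝ → ℝ := fun z =>
  if 0 ≤ z ∧ z ≤ (1 - γ) / 2 then (1 / γ) * Real.log ((1 + γ) / (1 - γ))
  else if (1 - γ) / 2 < z ∧ z ≤ (1 + γ) / 2 then (1 / γ) * Real.log ((1 + γ) / (2 * z))
  else 0

def kerK (γ : ℝ) (x z : ℝ) : ENNReal :=
  if 0 ≤ z ∧ z ≤ γ * x + (1 - γ) / 2 then ENNReal.ofReal ((γ * x + (1 - γ) / 2)⁻¹) else 0

lemma kerK_meas (γ : ℝ) : Measurable (Function.uncurry (kerK γ)) := by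
  unfold kerK Function.uncurry
  refine Measurable.ite ?_ (by fun_prop) (by fun_prop)
  have e1 : MeasurableSet {p : ℝ × ℝ | 0 ≤ p.2} :=
    measurableSet_le measurable_const measurable_snd
  have e2 : MeasurableSet {p : ℝ × ℝ | p.2 ≤ γ * p.1 + (1 - γ) / 2} :=
    measurableSet_le measurable_snd (by fun_prop)
  exact e1.inter e2

lemma inner_y (w : ℝ) (hw : 0 < w) (A : Set ℝ) (hA : MeasurableSet A) :
    (volume.restrict (Set.Icc (0 : ℝ) 1)) {y | y * w ∈ A}
      = ∫⁻ z in A, (if 0 ≤ z ∧ z ≤ w then ENNReal.ofReal w⁻¹ else 0) := by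
  have h1 : MeasurableSet {y : ℝ | y * w ∈ A} := (measurable_id.mul_const w) hA
  rw [Measure.restrict_apply h1]
  have h2 : {y : ℝ | y * w ∈ A} ∩ Set.Icc 0 1 = (fun y => y * w) ⁻¹' (A ∩ Set.Icc 0 w) := by
    ext y
    simp only [Set.mem_inter_iff, Set.mem_ofPred_eq, Set.mem_Icc, Set.mem_preimage]
    have e1 : 0 ≤ y * w ↔ 0 ≤ y := by
      constructor
      · intro h; exact nonneg_of_mul_nonneg_left h hw
      · intro h; positivity
    have e2 : y * w ≤ w ↔ y ≤ 1 := by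
      constructor
      · intro h; by_contra! h'; nlinarith
      · intro h; nlinarith
    rw [e1, e2]
  rw [h2, Real.volume_preimage_mul_right hw.ne', abs_of_pos (inv_pos.2 hw)]
  have h3 : (fun z : ℝ => (if 0 ≤ z ∧ z ≤ w then ENNReal.ofReal w⁻¹ else 0))
      = (Set.Icc 0 w).indicator (fun _ => ENNReal.ofReal w⁻¹) := by
    ext z
    simp [Set.indicator_apply]
  rw [h3, lintegral_indicator measurableSet_Icc, setLIntegral_const,
    Measure.restrict_apply measurableSet_Icc, Set.inter_comm]

lemma inner_x (γ : ℝ) (h0 : 0 < γ) (h1 : γ ≤ 1) (z : ℝ) (hz : z ≠ 0) :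
    ∫⁻ x in Set.Icc (0 : ℝ) 1, kerK γ x z = ENNReal.ofReal (fidDensity γ z) := by
  rcases lt_or_gt_of_ne hz with hz | hz
  · have : ∀ x, kerK γ x z = 0 := fun x => by
      unfold kerK; rw [if_neg]; intro h; linarith [h.1]
    simp only [this, lintegral_zero]
    unfold fidDensity
    rw [if_neg (by intro h; linarith [h.1]), if_neg (by intro h; linarith [h.1])]
    simp
  obtain ⟨a, ha⟩ : ∃ a, a = (1 - γ) / 2 := ⟨_, rfl⟩
  have ha0 : 0 ≤ a := by rw [ha]; linarith
  have hb : γ + a = (1 + γ) / 2 := by rw [ha]; ring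
  by_cases hzb : (1 + γ) / 2 < z
  · have : ∀ x ∈ Set.Icc (0:ℝ) 1, kerK γ x z = 0 := fun x hx => by
      unfold kerK; rw [if_neg]; intro h; nlinarith [h.2, hx.2]
    rw [setLIntegral_congr_fun measurableSet_Icc this, lintegral_zero]
    unfold fidDensity
    rw [if_neg (by intro h; linarith [h.2]), if_neg (by intro h; linarith [h.2])]
    simp
  push Not at hzb
  -- main case
  obtain ⟨m, hm⟩ : ∃ m, m = max a z := ⟨_, rfl⟩
  have hm0 : 0 < m := by rw [hm]; exact lt_of_lt_of_le hz (le_max_right _ _)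
  have hma : a ≤ m := by rw [hm]; exact le_max_left _ _
  have hmb : m ≤ γ + a := by rw [hm]; exact max_le (by linarith) (by linarith)
  obtain ⟨c, hc⟩ : ∃ c, c = (m - a) / γ := ⟨_, rfl⟩
  have hgc : γ * c + a = m := by rw [hc]; field_simp; ring
  have hc0 : 0 ≤ c := by rw [hc]; exact div_nonneg (by linarith) h0.le
  have hc1 : c ≤ 1 := by rw [hc, div_le_one h0]; linarith
  have hfid : fidDensity γ z = (Real.log (γ * 1 + a) - Real.log m) / γ := by
    rw [mul_one, hb, ← Real.log_div (by linarith) hm0.ne']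
    unfold fidDensity
    by_cases hza : z ≤ (1 - γ) / 2
    · rw [if_pos ⟨hz.le, hza⟩, hm, max_eq_left (by rw [ha]; exact hza), ha,
        div_div_div_cancel_right₀ (by norm_num)]
      ring
    · push Not at hza
      rw [if_neg (by intro h; linarith [h.2]), if_pos ⟨hza, hzb⟩, hm,
        max_eq_right (by rw [ha]; exact hza.le), div_div]
      ring
  have hK : ∀ x ∈ Set.Icc (0:ℝ) 1, kerK γ x z
      = (Set.Icc c 1).indicator (fun x => ENNReal.ofReal ((γ * x + a)⁻¹)) x := fun x hx => by
    unfold kerK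
    rw [Set.indicator_apply, ← ha]
    have : (0 ≤ z ∧ z ≤ γ * x + a) ↔ x ∈ Set.Icc c 1 := by
      constructor
      · rintro ⟨_, h⟩
        refine ⟨?_, hx.2⟩
        rw [hc, div_le_iff₀ h0, hm]
        have : max a z ≤ γ * x + a := max_le (by nlinarith [hx.1]) h
        linarith
      · rintro ⟨h, _⟩
        refine ⟨hz.le, ?_⟩
        have : z ≤ m := by rw [hm]; exact le_max_right _ _
        nlinarith
    simp only [this]
  rw [setLIntegral_congr_fun measurableSet_Icc hK, lintegral_indicator measurableSet_Icc,
    Measure.restrict_restrict measurableSet_Icc,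
    Set.inter_eq_left.2 (Set.Icc_subset_Icc hc0 le_rfl)]
  have hpos : ∀ x ∈ Set.Icc c 1, 0 < γ * x + a := fun x hx => by nlinarith [hx.1]
  have hcont : ContinuousOn (fun x => (γ * x + a)⁻¹) (Set.Icc c 1) :=
    ContinuousOn.inv₀ (by fun_prop) (fun x hx => (hpos x hx).ne')
  rw [← ofReal_integral_eq_lintegral_ofReal (hcont.integrableOn_Icc)
    ((ae_restrict_iff' measurableSet_Icc).2
      (Filter.Eventually.of_forall fun x hx => (inv_pos.2 (hpos x hx)).le))]
  congr 1
  rw [integral_Icc_eq_integral_Ioc, ← intervalIntegral.integral_of_le hc1, hfid]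
  have := intervalIntegral.integral_eq_sub_of_hasDerivAt (a := c) (b := 1)
    (f := fun x => Real.log (γ * x + a) / γ) (f' := fun x => (γ * x + a)⁻¹) ?_ ?_
  · rw [this, hgc]; ring
  · intro x hx
    rw [Set.uIcc_of_le hc1] at hx
    have h := (((hasDerivAt_id x).const_mul γ).add_const a).log (hpos x hx).ne'
    have h' := h.div_const γ
    have e : (γ * x + a)⁻¹ = γ * 1 / (γ * x + a) / γ := by
      have := (hpos x hx).ne'
      field_simp
    rw [e]
    exact h'
  · apply ContinuousOn.intervalIntegrable
    rwa [Set.uIcc_of_le hc1]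

/-- For `γ ∈ (0,1]` and independent random variables `X, Y`, each uniform
on `[0,1]`, the random variable `Z = Y·(γX + (1−γ)/2)` has probability density `fidDensity γ`
with respect to Lebesgue measure. -/
theorem density_of_product_of_uniforms (γ : ℝ) (hγ : γ ∈ Set.Ioc (0 : ℝ) 1)
    {Ω : Type*} [MeasurableSpace Ω] (P : Measure Ω) [IsProbabilityMeasure P]
    (X Y : Ω → ℝ) (hX : Measurable X) (hY : Measurable Y)
    (hindep : ProbabilityTheory.IndepFun X Y P)
    (hXunif : Measure.map X P = volume.restrict (Set.Icc (0 : ℝ) 1))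
    (hYunif : Measure.map Y P = volume.restrict (Set.Icc (0 : ℝ) 1)) :
    Measure.map (fun ω => Y ω * (γ * X ω + (1 - γ) / 2)) P
      = volume.withDensity (fun z : ℝ => ENNReal.ofReal (fidDensity γ z)) := by
  obtain ⟨h0, h1⟩ := hγ
  have hprod := (ProbabilityTheory.indepFun_iff_map_prod_eq_prod_map_map
    hX.aemeasurable hY.aemeasurable).1 hindep
  rw [hXunif, hYunif] at hprod
  have hg : Measurable (fun p : ℝ × ℝ => p.2 * (γ * p.1 + (1 - γ) / 2)) := by fun_prop
  have hmap : Measure.map (fun ω => Y ω * (γ * X ω + (1 - γ) / 2)) P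
      = Measure.map (fun p : ℝ × ℝ => p.2 * (γ * p.1 + (1 - γ) / 2))
        (Measure.map (fun ω => (X ω, Y ω)) P) := by
    rw [Measure.map_map hg (hX.prodMk hY)]
    rfl
  rw [hmap, hprod]
  ext A hA
  rw [Measure.map_apply hg hA, Measure.prod_apply (hg hA), withDensity_apply _ hA]
  have hne : ∀ᵐ z : ℝ, z ≠ 0 := by
    simp [ae_iff]
  calc _ = ∫⁻ x in Set.Icc (0:ℝ) 1, ∫⁻ z in A, kerK γ x z := by
        apply lintegral_congr_ae
        filter_upwards [ae_restrict_mem measurableSet_Icc, ae_restrict_of_ae hne] with x hx hx0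
        have hxp : 0 < x := lt_of_le_of_ne hx.1 (Ne.symm hx0)
        exact inner_y (γ * x + (1 - γ) / 2) (by nlinarith [mul_pos h0 hxp]) A hA
    _ = ∫⁻ z in A, ∫⁻ x in Set.Icc (0:ℝ) 1, kerK γ x z :=
        lintegral_lintegral_swap (kerK_meas γ).aemeasurable
    _ = _ := by
        apply lintegral_congr_ae
        filter_upwards [ae_restrict_of_ae hne] with z hz
        exact inner_x γ h0 h1 z hz
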